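/- Suppose M is a k-bounded m×n integer matrix, and let P = {v ∈ ℕ^n : M·v ≥ 0}, where M·v ≥ 0 means every entry of the integer vector M·v is nonnegative. If P contains a nonzero vector, then P contains a nonzero vector v that is (nk + n·log₂(n)/2)-bounded; that is, every entry of v is at most 2^{nk} · n^{n/2} (as real numbers). -/

import Mathlib

/-!
The cone `{v | 0 ≤ v, 0 ≤ M v}` is cut out by the rows of the matrix `A` obtained by stacking `M` on
the identity. A nonzero vector `v` of the cone at which a maximal set of rows vanishes spans an
extreme ray: by a ratio test, these rows determine `v` up to scaling. Adjoining to them one row that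
is positive at `v`, we find an invertible square submatrix `B` of `A` such that `B v` is a positive
multiple of a unit vector. By Cramer's rule `v` is proportional to a column of the adjugate of `B`,
so the absolute values of this column form a nonzero vector of the cone. Its entries are minors
of `B`, which Hadamard's inequality bounds.
-/

open scoped Matrix

section Hadamard

variable {κ : Type*} [Fintype κ]

lemma abs_det_le_prod_norm_row_fin {n : ℕ} (A : Matrix (Fin n) (Fin n) ℝ) :
    |A.det| ≤ ∏ i, ‖WithLp.toLp 2 (A i)‖ := by
  have : Fact (Module.finrank ℝ (EuclideanSpace ℝ (Fin n)) = n) := ⟨finrank_euclideanSpace_fin⟩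
  let b := EuclideanSpace.basisFun (Fin n) ℝ
  let rows : Fin n → EuclideanSpace ℝ (Fin n) := fun i => WithLp.toLp 2 (A i)
  have hdet : b.toBasis.det rows = A.det := by
    rw [Module.Basis.det_apply, ← Matrix.det_transpose]
    rfl
  rw [← hdet, ← b.toBasis.orientation.volumeForm_robust b rfl]
  exact b.toBasis.orientation.abs_volumeForm_apply_le rows

lemma abs_det_le_prod_norm_row [DecidableEq κ] (A : Matrix κ κ ℝ) :
    |A.det| ≤ ∏ i, ‖WithLp.toLp 2 (A i)‖ := by
  let e := Fintype.equivFin κ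
  have hnorm (i : Fin (Fintype.card κ)) :
      ‖WithLp.toLp 2 (A.reindex e e i)‖ = ‖WithLp.toLp 2 (A (e.symm i))‖ := by
    simp only [EuclideanSpace.norm_eq, Matrix.reindex_apply, Matrix.submatrix_apply]
    rw [e.symm.sum_comp fun j => ‖A (e.symm i) j‖ ^ 2]
  calc |A.det| = |(A.reindex e e).det| := by rw [Matrix.det_reindex_self]
    _ ≤ ∏ i, ‖WithLp.toLp 2 (A.reindex e e i)‖ := abs_det_le_prod_norm_row_fin _
    _ = ∏ i, ‖WithLp.toLp 2 (A (e.symm i))‖ := Finset.prod_congr rfl fun i _ => hnorm i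
    _ = ∏ i, ‖WithLp.toLp 2 (A i)‖ := e.symm.prod_comp fun i => ‖WithLp.toLp 2 (A i)‖

lemma norm_toLp_two_le_mul_sqrt_card {c : ℝ} (hc : 0 ≤ c) {x : κ → ℝ} (hx : ∀ i, |x i| ≤ c) :
    ‖WithLp.toLp 2 x‖ ≤ c * √(Fintype.card κ) := by
  rw [EuclideanSpace.norm_eq]
  refine Real.sqrt_le_iff.2 ⟨by positivity, ?_⟩
  calc ∑ i, ‖x i‖ ^ 2 ≤ ∑ _i : κ, c ^ 2 :=
        Finset.sum_le_sum fun i _ => pow_le_pow_left₀ (norm_nonneg _) (hx i) 2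
    _ = (c * √(Fintype.card κ)) ^ 2 := by
        rw [mul_pow, Real.sq_sqrt (Nat.cast_nonneg _), Finset.sum_const, Finset.card_univ,
          nsmul_eq_mul, mul_comm]

lemma abs_det_le_of_abs_le [DecidableEq κ] {c : ℝ} (hc : 0 ≤ c) {A : Matrix κ κ ℝ}
    (hA : ∀ i j, |A i j| ≤ c) :
    |A.det| ≤ c ^ Fintype.card κ * (Fintype.card κ : ℝ) ^ ((Fintype.card κ : ℝ) / 2) :=
  calc |A.det| ≤ ∏ i, ‖WithLp.toLp 2 (A i)‖ := abs_det_le_prod_norm_row A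
    _ ≤ ∏ _i : κ, (c * √(Fintype.card κ)) :=
        Finset.prod_le_prod (fun _ _ => norm_nonneg _)
          fun i _ => norm_toLp_two_le_mul_sqrt_card hc (hA i)
    _ = c ^ Fintype.card κ * (Fintype.card κ : ℝ) ^ ((Fintype.card κ : ℝ) / 2) := by
        rw [Finset.prod_const, Finset.card_univ, mul_pow,
          Real.rpow_div_two_eq_sqrt _ (Nat.cast_nonneg _), Real.rpow_natCast]

lemma abs_adjugate_le_of_abs_le [DecidableEq κ] {c : ℝ} (hc : 1 ≤ c) {A : Matrix κ κ ℝ}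
    (hA : ∀ i j, |A i j| ≤ c) (i j : κ) :
    |A.adjugate i j| ≤ c ^ Fintype.card κ * (Fintype.card κ : ℝ) ^ ((Fintype.card κ : ℝ) / 2) := by
  rw [Matrix.adjugate_apply]
  refine abs_det_le_of_abs_le (zero_le_one.trans hc) fun a b => ?_
  obtain rfl | ha := eq_or_ne a j
  · rw [Matrix.updateRow_self, Pi.single_apply]
    split_ifs <;> simp [hc, zero_le_one.trans hc]
  · rw [Matrix.updateRow_ne ha]
    exact hA a b

end Hadamard

section InvertibleSubmatrix

variable {ι κ : Type*} [Fintype κ]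

lemma mulVec_injective_map_algebraMap {R : Type*} (K : Type*) [CommRing R] [Field K] [Algebra R K]
    [IsFractionRing R K] {A : Matrix ι κ R} (hA : Function.Injective A.mulVec) :
    Function.Injective (A.map (algebraMap R K)).mulVec := by
  rw [Matrix.mulVec_injective_iff] at hA ⊢
  rw [← LinearIndependent.iff_fractionRing R K]
  have hinj : Function.Injective ((Algebra.linearMap R K).compLeft ι) :=
    (IsFractionRing.injective R K).comp_left
  exact hA.map' _ (LinearMap.ker_eq_bot.2 hinj)

variable [Finite ι] [DecidableEq κ]

lemma exists_submatrix_det_ne_zero_of_mulVec_injective_of_field {K : Type*} [Field K]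
    {A : Matrix ι κ K} (hA : Function.Injective A.mulVec) :
    ∃ f : κ → ι, (A.submatrix f id).det ≠ 0 := by
  have hrank : Module.finrank K (Submodule.span K (Set.range A.row)) = Fintype.card κ := by
    rw [← A.rank_eq_finrank_span_row, Matrix.rank,
      LinearMap.finrank_range_of_inj (f := A.mulVecLin) hA, Module.finrank_fintype_fun_eq_card]
  obtain ⟨τ, g, hg, hspan, hindep⟩ := exists_linearIndependent' K A.row
  have : Fintype τ := @Fintype.ofFinite τ (Finite.of_injective g hg)
  have hcard : Fintype.card κ = Fintype.card τ := by
    rw [← hrank, ← hspan, finrank_span_eq_card hindep]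
  let e : κ ≃ τ := Fintype.equivOfCardEq hcard
  have hunit : IsUnit (A.submatrix (g ∘ e) id) :=
    Matrix.linearIndependent_rows_iff_isUnit.1 (hindep.comp e e.injective)
  exact ⟨g ∘ e, ((Matrix.isUnit_iff_isUnit_det _).1 hunit).ne_zero⟩

lemma exists_submatrix_det_ne_zero_of_mulVec_injective {R : Type*} [CommRing R] [IsDomain R]
    {A : Matrix ι κ R} (hA : Function.Injective A.mulVec) :
    ∃ f : κ → ι, (A.submatrix f id).det ≠ 0 := by
  obtain ⟨f, hf⟩ := exists_submatrix_det_ne_zero_of_mulVec_injective_of_field <|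
    mulVec_injective_map_algebraMap (FractionRing R) hA
  refine ⟨f, fun hdet => hf ?_⟩
  rw [Matrix.submatrix_map, ← RingHom.mapMatrix_apply, ← RingHom.map_det, hdet, map_zero]

end InvertibleSubmatrix

lemma smul_adjugate_col_of_mulVec_eq_single {R κ : Type*} [CommRing R] [Fintype κ] [DecidableEq κ]
    {B : Matrix κ κ R} {v : κ → R} {i : κ} {c : R} (h : B *ᵥ v = Pi.single i c) :
    c • B.adjugate.col i = B.det • v :=
  calc c • B.adjugate.col i = B.adjugate *ᵥ Pi.single i c := by
        rw [Matrix.mulVec_single, op_smul_eq_smul]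
    _ = B.det • v := by
        rw [← h, Matrix.mulVec_mulVec, Matrix.adjugate_mul, Matrix.smul_mulVec, Matrix.one_mulVec]

section ExtremeRay

variable {R ι κ : Type*} [CommRing R] [LinearOrder R] [Fintype κ]

/-- The rows of `A` that vanish at `v`, that is, the constraints of the system `0 ≤ A *ᵥ x` that are
tight at `x = v`. -/
def tightRows (A : Matrix ι κ R) (v : κ → R) : Set ι := {i | (A *ᵥ v) i = 0}

/-- `v` spans an extreme ray of the polyhedral cone `{x | 0 ≤ A *ᵥ x}`, expressed by maximality of
its set of tight rows among the nonzero vectors of the cone. In a pointed cone the tight rows then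
determine `v` up to scaling. -/
def IsExtremeRay (A : Matrix ι κ R) (v : κ → R) : Prop :=
  MaximalFor (fun x => x ≠ 0 ∧ 0 ≤ A *ᵥ x) (tightRows A) v

lemma exists_isExtremeRay [Finite ι] {A : Matrix ι κ R} (h : ∃ v, v ≠ 0 ∧ 0 ≤ A *ᵥ v) :
    ∃ v, IsExtremeRay A v :=
  Set.Finite.exists_maximalFor' (tightRows A) {x | x ≠ 0 ∧ 0 ≤ A *ᵥ x} (Set.toFinite _) h

variable [IsStrictOrderedRing R]

lemma exists_forall_mul_le_mul_of_pos {S : Finset ι} (hS : S.Nonempty) (a : ι → R) {b : ι → R}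
    (hb : ∀ i ∈ S, 0 < b i) : ∃ l ∈ S, ∀ i ∈ S, a l * b i ≤ a i * b l := by
  induction hS using Finset.Nonempty.cons_induction with
  | singleton i => exact ⟨i, by simp⟩
  | cons j S hj _ ih =>
    obtain ⟨l, hl, hmin⟩ := ih fun i hi => hb i (Finset.mem_cons_of_mem hi)
    have hbj : 0 < b j := hb j (Finset.mem_cons_self j S)
    have hbl : 0 < b l := hb l (Finset.mem_cons_of_mem hl)
    obtain hle | hlt := le_total (a l * b j) (a j * b l)
    · exact ⟨l, Finset.mem_cons_of_mem hl, Finset.forall_mem_cons hj _ |>.2 ⟨hle, hmin⟩⟩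
    · refine ⟨j, Finset.mem_cons_self j S, Finset.forall_mem_cons hj _ |>.2 ⟨le_rfl, ?_⟩⟩
      intro i hi
      have hbi : 0 < b i := hb i (Finset.mem_cons_of_mem hi)
      refine le_of_mul_le_mul_right ?_ hbl
      calc a j * b i * b l = a j * b l * b i := by ring
        _ ≤ a l * b j * b i := by gcongr
        _ = a l * b i * b j := by ring
        _ ≤ a i * b l * b j := mul_le_mul_of_nonneg_right (hmin i hi) hbj.le
        _ = a i * b j * b l := by ring

-- Move from `v` in the direction `-w` until the first new constraint becomes tight.
lemma exists_tightRows_ssubset [Finite ι] {A : Matrix ι κ R} {v w : κ → R} (hv : 0 ≤ A *ᵥ v)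
    (hvw : tightRows A v ⊆ tightRows A w) (hw : ∃ i, 0 < (A *ᵥ w) i) :
    ∃ a b : R, 0 < a ∧ 0 ≤ A *ᵥ (a • v - b • w) ∧
      tightRows A v ⊂ tightRows A (a • v - b • w) := by
  obtain ⟨l, hl, hmin⟩ := exists_forall_mul_le_mul_of_pos
    (S := (Set.toFinite {i | 0 < (A *ᵥ w) i}).toFinset) ((Set.Finite.toFinset_nonempty _).2 hw)
    (A *ᵥ v) (b := A *ᵥ w) (by simp)
  simp only [Set.Finite.mem_toFinset, Set.mem_ofPred_eq] at hl hmin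
  have hmove (i : ι) : (A *ᵥ ((A *ᵥ w) l • v - (A *ᵥ v) l • w)) i
      = (A *ᵥ w) l * (A *ᵥ v) i - (A *ᵥ v) l * (A *ᵥ w) i := by
    simp [Matrix.mulVec_sub, Matrix.mulVec_smul]
  refine ⟨(A *ᵥ w) l, (A *ᵥ v) l, hl, fun i => ?_,
    (Set.ssubset_iff_of_subset fun i hi => ?_).2 ⟨l, ?_, fun hlv => hl.ne' (hvw hlv)⟩⟩
  · rw [hmove, Pi.zero_apply, sub_nonneg]
    obtain hi | hi := lt_or_ge 0 ((A *ᵥ w) i)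
    · exact (hmin i hi).trans_eq (mul_comm _ _)
    · exact (mul_nonpos_of_nonneg_of_nonpos (hv l) hi).trans (mul_nonneg hl.le (hv i))
  · have hvi : (A *ᵥ v) i = 0 := hi
    have hwi : (A *ᵥ w) i = 0 := hvw hi
    exact (hmove i).trans (by rw [hvi, hwi, mul_zero, mul_zero, sub_zero])
  · exact (hmove l).trans (by rw [mul_comm, sub_self])

namespace IsExtremeRay

variable [Finite ι] {A : Matrix ι κ R} {v : κ → R}

lemma exists_smul_eq_smul_of_pos (hv : IsExtremeRay A v) {w : κ → R}
    (hvw : tightRows A v ⊆ tightRows A w) (hw : ∃ i, 0 < (A *ᵥ w) i) :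
    ∃ a b : R, a ≠ 0 ∧ a • w = b • v := by
  obtain ⟨⟨hv0, hvA⟩, hmax⟩ := hv
  obtain ⟨a, b, ha, hnonneg, hss⟩ := exists_tightRows_ssubset hvA hvw hw
  have heq : a • v = b • w := by
    by_contra hne
    exact hss.2 (hmax ⟨sub_ne_zero.2 hne, hnonneg⟩ hss.1)
  refine ⟨b, a, ?_, heq.symm⟩
  rintro rfl
  exact smul_ne_zero ha.ne' hv0 (by rw [heq, zero_smul])

lemma exists_smul_eq_smul (hv : IsExtremeRay A v) (hA : Function.Injective A.mulVec) {w : κ → R}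
    (hvw : tightRows A v ⊆ tightRows A w) : ∃ a b : R, a ≠ 0 ∧ a • w = b • v := by
  by_cases hpos : ∃ i, 0 < (A *ᵥ w) i
  · exact hv.exists_smul_eq_smul_of_pos hvw hpos
  by_cases hneg : ∃ i, 0 < (A *ᵥ (-w)) i
  · have hvw' : tightRows A v ⊆ tightRows A (-w) := fun i hi => by
      simpa [tightRows, Matrix.mulVec_neg] using hvw hi
    obtain ⟨a, b, ha, hab⟩ := hv.exists_smul_eq_smul_of_pos hvw' hneg
    exact ⟨-a, b, neg_ne_zero.2 ha, by rw [← hab, neg_smul, smul_neg]⟩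
  · have hAw : A *ᵥ w = 0 := funext fun i => le_antisymm (not_lt.1 fun h => hpos ⟨i, h⟩)
      (not_lt.1 fun h => hneg ⟨i, by simpa [Matrix.mulVec_neg] using h⟩)
    have hw : w = 0 := hA (hAw.trans A.mulVec_zero.symm)
    exact ⟨1, 0, one_ne_zero, by rw [hw, smul_zero, zero_smul]⟩

lemma mulVec_injective_submatrix_insert_tightRows (hv : IsExtremeRay A v)
    (hA : Function.Injective A.mulVec) {l : ι} (hl : l ∉ tightRows A v) :
    Function.Injective
      (A.submatrix ((↑) : ↥(insert l (tightRows A v)) → ι) id).mulVec := by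
  refine (injective_iff_map_eq_zero (Matrix.mulVecLin _)).2 fun w hw => ?_
  have hzero (i : ι) (hi : i ∈ insert l (tightRows A v)) : (A *ᵥ w) i = 0 := congrFun hw ⟨i, hi⟩
  obtain ⟨a, b, ha, hab⟩ := hv.exists_smul_eq_smul hA fun i hi => hzero i (Or.inr hi)
  have hbl : b * (A *ᵥ v) l = 0 :=
    calc b * (A *ᵥ v) l = (A *ᵥ (a • w)) l := by
          rw [hab, Matrix.mulVec_smul, Pi.smul_apply, smul_eq_mul]
      _ = 0 := by
          rw [Matrix.mulVec_smul, Pi.smul_apply, hzero l (Or.inl rfl), smul_zero]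
  have hb : b = 0 := (mul_eq_zero.1 hbl).resolve_right hl
  rw [hb, zero_smul] at hab
  exact (smul_eq_zero.1 hab).resolve_left ha

variable [DecidableEq κ]

lemma exists_submatrix_mulVec_eq_single (hv : IsExtremeRay A v)
    (hA : Function.Injective A.mulVec) :
    ∃ (f : κ → ι) (i : κ) (c : R), 0 < c ∧ (A.submatrix f id).det ≠ 0 ∧
      A.submatrix f id *ᵥ v = Pi.single i c := by
  obtain ⟨hv0, hvA⟩ := hv.prop
  have hAv : A *ᵥ v ≠ 0 := fun h => hv0 (hA (h.trans A.mulVec_zero.symm))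
  obtain ⟨l, hl⟩ := Function.ne_iff.1 hAv
  obtain ⟨g, hdet⟩ :=
    exists_submatrix_det_ne_zero_of_mulVec_injective
      (hv.mulVec_injective_submatrix_insert_tightRows hA hl)
  let f : κ → ι := fun i => g i
  change (A.submatrix f id).det ≠ 0 at hdet
  have hBv : A.submatrix f id *ᵥ v ≠ 0 := fun h =>
    hv0 (Matrix.eq_zero_of_mulVec_eq_zero hdet h)
  obtain ⟨i, hi⟩ := Function.ne_iff.1 hBv
  have hfi : f i = l := (g i).2.resolve_right hi
  refine ⟨f, i, (A *ᵥ v) l, (hvA l).lt_of_ne' hl, hdet, funext fun j => ?_⟩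
  obtain rfl | hji := eq_or_ne j i
  · rw [Pi.single_eq_same, ← hfi]
    rfl
  · have hfj : f j ≠ l := fun h =>
      hdet (Matrix.det_zero_of_row_eq hji (by ext; simp [h, hfi]))
    rw [Pi.single_eq_of_ne hji]
    exact (g j).2.resolve_left hfj

lemma exists_abs_adjugate_mem_cone (hv : IsExtremeRay A v) (hA : Function.Injective A.mulVec)
    (hpos : 0 ≤ v) :
    ∃ (f : κ → ι) (i : κ), |(A.submatrix f id).adjugate.col i| ≠ 0 ∧
      0 ≤ A *ᵥ |(A.submatrix f id).adjugate.col i| := by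
  obtain ⟨hv0, hvA⟩ := hv.prop
  obtain ⟨f, i, c, hc, hdet, hBv⟩ := hv.exists_submatrix_mulVec_eq_single hA
  set B := A.submatrix f id
  have hscale : c • |B.adjugate.col i| = |B.det| • v := by
    have hcol := smul_adjugate_col_of_mulVec_eq_single hBv
    ext j
    have hcolj := congrArg abs (congrFun hcol j)
    simpa [abs_mul, abs_of_pos hc, abs_of_nonneg (hpos j)] using hcolj
  refine ⟨f, i, fun h0 => ?_, fun j => ?_⟩
  · exact smul_ne_zero (abs_ne_zero.2 hdet) hv0 (by rw [← hscale, h0, smul_zero])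
  · refine (mul_nonneg_iff_of_pos_left hc).1 ?_
    calc 0 ≤ |B.det| * (A *ᵥ v) j := mul_nonneg (abs_nonneg _) (hvA j)
      _ = c * (A *ᵥ |B.adjugate.col i|) j := by
          rw [← smul_eq_mul, ← Pi.smul_apply, ← Matrix.mulVec_smul, ← hscale,
            Matrix.mulVec_smul, Pi.smul_apply, smul_eq_mul]

end IsExtremeRay

lemma exists_abs_adjugate_mem_cone_of_nonneg [Finite ι] [DecidableEq κ] (M : Matrix ι κ R)
    (h : ∃ v : κ → R, v ≠ 0 ∧ 0 ≤ v ∧ 0 ≤ M *ᵥ v) :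
    ∃ (f : κ → ι ⊕ κ) (i : κ),
      |((M.fromRows 1).submatrix f id).adjugate.col i| ≠ 0 ∧
      0 ≤ M *ᵥ |((M.fromRows 1).submatrix f id).adjugate.col i| := by
  have hcone (v : κ → R) : 0 ≤ M.fromRows (1 : Matrix κ κ R) *ᵥ v ↔ 0 ≤ M *ᵥ v ∧ 0 ≤ v := by
    simp [Matrix.fromRows_mulVec, Pi.le_def]
  have hinj : Function.Injective (M.fromRows (1 : Matrix κ κ R)).mulVec := fun v w hvw => by
    simpa [Matrix.fromRows_mulVec] using congrArg (· ∘ Sum.inr) hvw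
  obtain ⟨v₀, hv₀, hv₀_nonneg, hMv₀⟩ := h
  obtain ⟨v, hv⟩ := exists_isExtremeRay ⟨v₀, hv₀, (hcone v₀).2 ⟨hMv₀, hv₀_nonneg⟩⟩
  obtain ⟨f, i, hne, hmem⟩ := hv.exists_abs_adjugate_mem_cone hinj ((hcone v).1 hv.prop.2).2
  exact ⟨f, i, hne, ((hcone _).1 hmem).1⟩

end ExtremeRay

lemma abs_fromRows_one_apply_le {R ι κ : Type*} [Ring R] [LinearOrder R] [IsOrderedRing R]
    [DecidableEq κ] {c : R} (hc : 1 ≤ c) {M : Matrix ι κ R} (hM : ∀ i j, |M i j| ≤ c)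
    (i : ι ⊕ κ) (j : κ) : |M.fromRows 1 i j| ≤ c := by
  cases i with
  | inl i => exact hM i j
  | inr i =>
    rw [Matrix.fromRows_apply_inr, Matrix.one_apply]
    split_ifs <;> simp [hc, zero_le_one.trans hc]

theorem small_vector_in_polytope_general {ι κ : Type*} [Finite ι] [Fintype κ] {c : ℤ} (hc : 1 ≤ c)
    (M : Matrix ι κ ℤ) (hM : ∀ i j, |M i j| ≤ c)
    (hP : ∃ v : κ → ℕ, v ≠ 0 ∧ ∀ i, 0 ≤ (M *ᵥ fun j => (v j : ℤ)) i) :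
    ∃ v : κ → ℕ, v ≠ 0 ∧ (∀ i, 0 ≤ (M *ᵥ fun j => (v j : ℤ)) i) ∧
      ∀ j, (v j : ℝ) ≤
        (c : ℝ) ^ Fintype.card κ * (Fintype.card κ : ℝ) ^ ((Fintype.card κ : ℝ) / 2) := by
  classical
  obtain ⟨v₀, hv₀, hMv₀⟩ := hP
  obtain ⟨f, i, hne, hmem⟩ := exists_abs_adjugate_mem_cone_of_nonneg M
    ⟨fun j => (v₀ j : ℤ), fun h => hv₀ (funext fun j => Nat.cast_eq_zero.1 (congrFun h j)),
      fun j => Int.natCast_nonneg (v₀ j), hMv₀⟩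
  set B := (M.fromRows 1).submatrix f id
  have hcast : (fun j => ((B.adjugate j i).natAbs : ℤ)) = |B.adjugate.col i| :=
    funext fun j => Int.natCast_natAbs _
  have hB (a b : κ) : |B.map (Int.castRingHom ℝ) a b| ≤ c := by
    have hab : |B a b| ≤ c := abs_fromRows_one_apply_le hc hM (f a) b
    simpa using (mod_cast hab : |(B a b : ℝ)| ≤ c)
  refine ⟨fun j => (B.adjugate j i).natAbs, fun h => hne ?_, fun l => ?_, fun j => ?_⟩
  · rw [← hcast]
    exact funext fun j => congrArg Nat.cast (congrFun h j)
  · rw [hcast]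
    exact hmem l
  · calc ((B.adjugate j i).natAbs : ℝ) = |(B.map (Int.castRingHom ℝ)).adjugate j i| := by
          rw [Nat.cast_natAbs, Int.cast_abs, ← RingHom.mapMatrix_apply, ← RingHom.map_adjugate]
          rfl
      _ ≤ _ := abs_adjugate_le_of_abs_le (mod_cast hc) hB j i

/-- If `M` is a `k`-bounded `m × n` integer matrix and the set
`P = {v ∈ ℕ^n : M · v ≥ 0}` contains a nonzero vector, then it contains a nonzero
vector every entry of which is at most `2 ^ (n * k) * n ^ (n / 2)` (as real numbers). -/
theorem small_vector_in_polytope (m n k : ℕ)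
    (M : Matrix (Fin m) (Fin n) ℤ) (hM : ∀ i j, |M i j| ≤ 2 ^ k)
    (hP : ∃ v : Fin n → ℕ, v ≠ 0 ∧
      ∀ i, 0 ≤ M.mulVec (fun j => (v j : ℤ)) i) :
    ∃ v : Fin n → ℕ, v ≠ 0 ∧
      (∀ i, 0 ≤ M.mulVec (fun j => (v j : ℤ)) i) ∧
      (∀ j, (v j : ℝ) ≤ 2 ^ (n * k) * (n : ℝ) ^ ((n : ℝ) / 2)) := by
  simpa [← pow_mul, mul_comm k n] using
    small_vector_in_polytope_general (one_le_pow₀ one_le_two) M hM hP
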